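/- arXiv:1905.00471 — 2 statements merged into one kernel-verified Lean document; each statement's English description precedes it below -/
import Mathlib

section
/- Let (Λ, w, π) be a balanced Γ-fair graph over a weighted bidirected graph (Γ, δ, ‾), and let α be a vertex of Λ. If the set of edges of Γ with source π(α) is finite, then the set of edges of Λ with source α is finite. -/
/-- A directed multigraph. -/
structure DiGraph where
  V : Type
  E : Type
  src : E → V
  tgt : E → V

/-- A graph homomorphism between directed multigraphs. -/
structure DiGraphHom (Λ Γ : DiGraph) where
  onV : Λ.V → Γ.V
  onE : Λ.E → Γ.E
  map_src : ∀ ε, Γ.src (onE ε) = onV (Λ.src ε)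
  map_tgt : ∀ ε, Γ.tgt (onE ε) = onV (Λ.tgt ε)

/-- The structure of a weighted bidirected graph on a directed multigraph `Γ`:
a positive weight function `δ` and an involution of edges exchanging sources and
targets and preserving weights. -/
structure BidirectedWeights (Γ : DiGraph) where
  δ : Γ.E → ℝ
  δ_pos : ∀ e, 0 < δ e
  bar : Γ.E → Γ.E
  bar_bar : ∀ e, bar (bar e) = e
  src_bar : ∀ e, Γ.src (bar e) = Γ.tgt e
  tgt_bar : ∀ e, Γ.tgt (bar e) = Γ.src e
  δ_bar : ∀ e, δ (bar e) = δ e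

/-- `(Λ, w, π)` is a `Γ`-fair graph: `w` is a positive weight function and for every
edge `e : a → b` of `Γ` and every vertex `α` of `Λ` over `a`, the weights of edges of `Λ`
with source `α` lying over `e` sum (unconditionally) to `δ e`. -/
def IsFair {Γ Λ : DiGraph} (D : BidirectedWeights Γ) (w : Λ.E → ℝ)
    (π : DiGraphHom Λ Γ) : Prop :=
  (∀ ε, 0 < w ε) ∧
    ∀ e : Γ.E, ∀ α : Λ.V, π.onV α = Γ.src e →
      HasSum (fun ε : {ε : Λ.E // Λ.src ε = α ∧ π.onE ε = e} => w ε.1) (D.δ e)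

/-- A `Γ`-fair graph is balanced if there exists an involution of the edges of `Λ`
exchanging sources and targets, inverting weights, and lying over the involution of `Γ`. -/
def IsBalanced {Γ Λ : DiGraph} (D : BidirectedWeights Γ) (w : Λ.E → ℝ)
    (π : DiGraphHom Λ Γ) : Prop :=
  ∃ barΛ : Λ.E → Λ.E,
    (∀ ε, barΛ (barΛ ε) = ε) ∧
    (∀ ε, Λ.src (barΛ ε) = Λ.tgt ε) ∧
    (∀ ε, Λ.tgt (barΛ ε) = Λ.src ε) ∧
    (∀ ε, w ε * w (barΛ ε) = 1) ∧
    (∀ ε, π.onE (barΛ ε) = D.bar (π.onE ε))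

/-! The weight of an edge `ε` of `Λ` over `e` is at most `δ e`, the sum of the weights of all edges
over `e` with the same source. Applied to the reversed edge, which has weight `(w ε)⁻¹` and lies
over an edge of the same weight `δ e`, this gives `(δ e)⁻¹ ≤ w ε`. So the weights of the edges
from `α` over `e` form a convergent sum of terms bounded away from zero, and there are only
finitely many of them. -/

namespace IsFair

variable {Γ Λ : DiGraph} {D : BidirectedWeights Γ} {w : Λ.E → ℝ} {π : DiGraphHom Λ Γ}

theorem weight_pos (hfair : IsFair D w π) (ε : Λ.E) : 0 < w ε :=
  hfair.1 ε

theorem hasSum_weight_fiber (hfair : IsFair D w π) (ε : Λ.E) :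
    HasSum (fun ε' : {ε' // Λ.src ε' = Λ.src ε ∧ π.onE ε' = π.onE ε} => w ε'.1)
      (D.δ (π.onE ε)) :=
  hfair.2 (π.onE ε) (Λ.src ε) (π.map_src ε).symm

theorem weight_le (hfair : IsFair D w π) (ε : Λ.E) : w ε ≤ D.δ (π.onE ε) :=
  le_hasSum (hfair.hasSum_weight_fiber ε) ⟨ε, rfl, rfl⟩ fun ε' _ => (hfair.weight_pos ε'.1).le

theorem inv_le_weight_of_isBalanced (hfair : IsFair D w π) (hbal : IsBalanced D w π) (ε : Λ.E) :
    (D.δ (π.onE ε))⁻¹ ≤ w ε := by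
  obtain ⟨barΛ, -, -, -, hw_bar, hπ_bar⟩ := hbal
  have hbar_le : w (barΛ ε) ≤ D.δ (π.onE ε) := by
    simpa only [hπ_bar, D.δ_bar] using hfair.weight_le (barΛ ε)
  calc (D.δ (π.onE ε))⁻¹ ≤ (w (barΛ ε))⁻¹ := inv_anti₀ (hfair.weight_pos _) hbar_le
    _ = w ε := (eq_inv_of_mul_eq_one_left (hw_bar ε)).symm

theorem finite_fiber_of_forall_le_weight (hfair : IsFair D w π) {e : Γ.E} {α : Λ.V} {c : ℝ}
    (hc : 0 < c) (hle : ∀ ε, Λ.src ε = α → π.onE ε = e → c ≤ w ε) :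
    {ε | Λ.src ε = α ∧ π.onE ε = e}.Finite := by
  rcases Set.eq_empty_or_nonempty {ε | Λ.src ε = α ∧ π.onE ε = e} with hempty | ⟨ε, rfl, rfl⟩
  · exact hempty ▸ Set.finite_empty
  · exact Finite.of_summable_const hc <| (hfair.hasSum_weight_fiber ε).summable.of_nonneg_of_le
      (fun _ => hc.le) fun ε' => hle ε'.1 ε'.2.1 ε'.2.2

theorem finite_fiber_of_isBalanced (hfair : IsFair D w π) (hbal : IsBalanced D w π)
    (e : Γ.E) (α : Λ.V) : {ε | Λ.src ε = α ∧ π.onE ε = e}.Finite :=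
  hfair.finite_fiber_of_forall_le_weight (inv_pos.mpr (D.δ_pos e)) fun ε _ hε =>
    hε ▸ hfair.inv_le_weight_of_isBalanced hbal ε

end IsFair

theorem outgoing_edges_finite_of_balanced_fair
    {Γ Λ : DiGraph} (D : BidirectedWeights Γ) (w : Λ.E → ℝ) (π : DiGraphHom Λ Γ)
    (hfair : IsFair D w π) (hbal : IsBalanced D w π) (α : Λ.V)
    (hΓ : {e : Γ.E | Γ.src e = π.onV α}.Finite) :
    {ε : Λ.E | Λ.src ε = α}.Finite := by
  have hmaps : Set.MapsTo π.onE {ε | Λ.src ε = α} {e | Γ.src e = π.onV α} :=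
    fun ε hε => (π.map_src ε).trans (congrArg π.onV hε)
  exact .of_finite_fibers π.onE (hΓ.subset hmaps.image_subset) fun e _ =>
    hfair.finite_fiber_of_isBalanced hbal e α
end

section
/- Let E, F, E', F' be finite-dimensional complex inner product spaces, let Φ: E → F and Ψ: E' → F' be bijective conjugate-linear maps, and let A: F → E and A': F' → E' be adjoints of Φ and Ψ respectively. Then there exist unitary isomorphisms (ℂ-linear inner-product-preserving bijections) U: E' → E and V: F' → F with Φ ∘ U = V ∘ Ψ if and only if the characteristic polynomials of A ∘ Φ and of A' ∘ Ψ are equal. -/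
open scoped ComplexInnerProductSpace

/-!
If `A` is an adjoint of the conjugate-linear map `Φ`, then `⟪A (Φ x), y⟫ = ⟪Φ y, Φ x⟫`. So `A ∘ Φ`
is symmetric, and it encodes exactly the Gram form `⟪Φ x, Φ y⟫`. This form determines `Φ` up to
a unitary of the target: if `⟪Φ x, Φ y⟫ = ⟪Ψ x, Ψ y⟫` for all `x` and `y`, then `Ψ x ↦ Φ x` is a
well-defined isometry on the range of `Ψ`, and it extends to a unitary when the targets have the
same dimension. Hence unitary equivalence of `Φ` and `Ψ` amounts to that of the symmetric operators
`A ∘ Φ` and `A' ∘ Ψ`, which is decided by their eigenvalues with multiplicity. For bijective `Φ` and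
`Ψ` the dimensions of the targets are the degrees of the characteristic polynomials.
-/

open Module (finrank)

theorem finrank_eq_of_charpoly_eq {R M N : Type*} [CommRing R] [Nontrivial R]
    [AddCommGroup M] [Module R M] [Module.Finite R M] [Module.Free R M]
    [AddCommGroup N] [Module R N] [Module.Finite R N] [Module.Free R N]
    {f : Module.End R M} {g : Module.End R N} (h : f.charpoly = g.charpoly) :
    finrank R M = finrank R N := by
  rw [← f.charpoly_natDegree, h, g.charpoly_natDegree]

theorem finrank_eq_of_semilinear_bijective {R S M N : Type*} [Semiring R] [Semiring S]
    [AddCommMonoid M] [Module R M] [AddCommMonoid N] [Module S N] {σ : R →+* S}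
    (hσ : Function.Bijective σ) {f : M →ₛₗ[σ] N} (hf : Function.Bijective f) :
    finrank R M = finrank S N := by
  have hrank := lift_rank_eq_of_equiv_equiv σ (AddEquiv.ofBijective f hf) hσ f.map_smulₛₗ
  simpa only [finrank, Cardinal.toNat_lift] using congrArg Cardinal.toNat hrank

theorem exists_linearMap_range_apply_eq_of_ker_le {R S M N P : Type*} [Ring R] [Ring S]
    {σ : R →+* S} [RingHomSurjective σ]
    [AddCommGroup M] [Module R M] [AddCommGroup N] [Module S N] [AddCommGroup P] [Module S P]
    {f : M →ₛₗ[σ] N} {g : M →ₛₗ[σ] P} (h : f.ker ≤ g.ker) :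
    ∃ L : f.range →ₗ[S] P, ∀ x, L (f.rangeRestrict x) = g x := by
  have hf : Function.Surjective f.rangeRestrict := f.surjective_rangeRestrict
  let L : f.range → P := fun z ↦ g (Function.surjInv hf z)
  have hL (x : M) : L (f.rangeRestrict x) = g x := by
    refine LinearMap.sub_mem_ker_iff.mp (h (LinearMap.sub_mem_ker_iff.mpr ?_))
    exact congrArg Subtype.val (Function.surjInv_eq hf (f.rangeRestrict x))
  refine ⟨{ toFun := L, map_add' := hf.forall₂.mpr fun x y ↦ ?_,
            map_smul' := fun c ↦ hf.forall.mpr fun x ↦ ?_ }, hL⟩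
  · rw [← map_add, hL, hL, hL, map_add]
  · obtain ⟨r, rfl⟩ := σ.surjective c
    rw [← LinearMap.map_smulₛₗ, hL, hL, LinearMap.map_smulₛₗ, RingHom.id_apply]

section Gram

open scoped InnerProductSpace

variable {𝕜 R M F F' : Type*} [RCLike 𝕜] [Ring R] {σ : R →+* 𝕜} [RingHomSurjective σ]
  [AddCommGroup M] [Module R M]
  [NormedAddCommGroup F] [InnerProductSpace 𝕜 F] [FiniteDimensional 𝕜 F]
  [NormedAddCommGroup F'] [InnerProductSpace 𝕜 F'] [FiniteDimensional 𝕜 F']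

theorem exists_linearIsometryEquiv_extend_of_finrank_eq (hn : finrank 𝕜 F' = finrank 𝕜 F)
    {S : Submodule 𝕜 F'} (L : S →ₗᵢ[𝕜] F) : ∃ V : F' ≃ₗᵢ[𝕜] F, ∀ s : S, V s = L s := by
  let W : F' ≃ₗᵢ[𝕜] F :=
    (stdOrthonormalBasis 𝕜 F').equiv (stdOrthonormalBasis 𝕜 F) (finCongr hn)
  let L' : S →ₗᵢ[𝕜] F' := W.symm.toLinearIsometry.comp L
  refine ⟨(W.toLinearIsometry.comp L'.extend).toLinearIsometryEquiv hn, fun s ↦ ?_⟩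
  calc W (L'.extend s) = W (L' s) := by rw [L'.extend_apply]
    _ = L s := W.apply_symm_apply (L s)

theorem exists_linearIsometryEquiv_comp_eq_iff_inner_eq (Φ : M →ₛₗ[σ] F) (Ψ : M →ₛₗ[σ] F') :
    (∃ V : F' ≃ₗᵢ[𝕜] F, ∀ x, Φ x = V (Ψ x)) ↔
      (∀ x y, ⟪Φ x, Φ y⟫_𝕜 = ⟪Ψ x, Ψ y⟫_𝕜) ∧ finrank 𝕜 F' = finrank 𝕜 F := by
  constructor
  · rintro ⟨V, hV⟩
    exact ⟨fun x y ↦ by rw [hV, hV, V.inner_map_map], V.toLinearEquiv.finrank_eq⟩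
  · rintro ⟨hinner, hn⟩
    have hnorm (x : M) : ‖Φ x‖ = ‖Ψ x‖ := by
      rw [@norm_eq_sqrt_re_inner 𝕜, hinner, ← norm_eq_sqrt_re_inner]
    have hker : Ψ.ker ≤ Φ.ker := fun x hx ↦ by
      rw [LinearMap.mem_ker] at hx ⊢
      rw [← norm_eq_zero, hnorm, hx, norm_zero]
    obtain ⟨L, hL⟩ := exists_linearMap_range_apply_eq_of_ker_le hker
    have hL_norm : ∀ z, ‖L z‖ = ‖z‖ :=
      Ψ.surjective_rangeRestrict.forall.mpr fun x ↦ by rw [hL, hnorm]; rfl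
    obtain ⟨V, hV⟩ := exists_linearIsometryEquiv_extend_of_finrank_eq hn ⟨L, hL_norm⟩
    exact ⟨V, fun x ↦ ((hV (Ψ.rangeRestrict x)).trans (hL x)).symm⟩

end Gram

section ConjLinear

open scoped InnerProductSpace

variable {𝕜 E F E' F' : Type*} [RCLike 𝕜]
  [NormedAddCommGroup E] [InnerProductSpace 𝕜 E] [NormedAddCommGroup F] [InnerProductSpace 𝕜 F]
  [NormedAddCommGroup E'] [InnerProductSpace 𝕜 E'] [NormedAddCommGroup F'] [InnerProductSpace 𝕜 F']

theorem exists_linearIsometryEquiv_intertwining_iff_charpoly_eq [FiniteDimensional 𝕜 E]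
    [FiniteDimensional 𝕜 E'] {T : E →ₗ[𝕜] E} {T' : E' →ₗ[𝕜] E'}
    (hT : T.IsSymmetric) (hT' : T'.IsSymmetric) :
    (∃ U : E' ≃ₗᵢ[𝕜] E, ∀ x, T (U x) = U (T' x)) ↔ T.charpoly = T'.charpoly := by
  constructor
  · rintro ⟨U, hU⟩
    have hconj : T = U.toLinearEquiv.conj T' := by
      ext z
      simpa [LinearEquiv.conj_apply] using hU (U.symm z)
    rw [hconj, LinearEquiv.charpoly_conj]
  · intro hchar
    have hn : finrank 𝕜 E' = finrank 𝕜 E := finrank_eq_of_charpoly_eq hchar.symm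
    have heigen : hT.eigenvalues rfl = hT'.eigenvalues hn :=
      (hT.eigenvalues_eq_eigenvalues_iff rfl hT' hn).mpr hchar
    let b := hT.eigenvectorBasis rfl
    let b' := hT'.eigenvectorBasis hn
    let U : E' ≃ₗᵢ[𝕜] E := b'.equiv b (Equiv.refl _)
    have hUb (i) : U (b' i) = b i := b'.equiv_apply_basis b (Equiv.refl _) i
    have hcomp : T ∘ₗ U.toLinearEquiv.toLinearMap = U.toLinearEquiv.toLinearMap ∘ₗ T' := by
      refine b'.toBasis.ext fun i ↦ ?_
      rw [b'.coe_toBasis]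
      calc T (U (b' i)) = (hT.eigenvalues rfl i : 𝕜) • b i := by
            rw [hUb, hT.apply_eigenvectorBasis]
        _ = U ((hT'.eigenvalues hn i : 𝕜) • b' i) := by rw [map_smul, hUb, heigen]
        _ = U (T' (b' i)) := by rw [hT'.apply_eigenvectorBasis]
    exact ⟨U, LinearMap.congr_fun hcomp⟩

/-- `A` is an adjoint of the conjugate-linear map `Φ`. Both maps being conjugate-linear, the
defining identity has `x` in the second slot on the right, unlike for adjoints of linear maps. -/
def IsConjAdjoint (A : F →ₗ⋆[𝕜] E) (Φ : E →ₗ⋆[𝕜] F) : Prop :=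
  ∀ x y, ⟪Φ x, y⟫_𝕜 = ⟪A y, x⟫_𝕜

namespace IsConjAdjoint

variable {Φ : E →ₗ⋆[𝕜] F} {A : F →ₗ⋆[𝕜] E} {Ψ : E' →ₗ⋆[𝕜] F'} {A' : F' →ₗ⋆[𝕜] E'}

theorem inner_comp_apply (hA : IsConjAdjoint A Φ) (x y : E) :
    ⟪A.comp Φ x, y⟫_𝕜 = ⟪Φ y, Φ x⟫_𝕜 :=
  (hA y (Φ x)).symm

theorem isSymmetric_comp (hA : IsConjAdjoint A Φ) : (A.comp Φ).IsSymmetric := fun x y ↦ by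
  rw [hA.inner_comp_apply, ← inner_conj_symm x, hA.inner_comp_apply, inner_conj_symm]

theorem comp_intertwines_iff_inner_eq (hA : IsConjAdjoint A Φ) (hA' : IsConjAdjoint A' Ψ)
    (U : E' ≃ₗᵢ[𝕜] E) :
    (∀ x, A.comp Φ (U x) = U (A'.comp Ψ x)) ↔
      ∀ x y, ⟪Φ (U x), Φ (U y)⟫_𝕜 = ⟪Ψ x, Ψ y⟫_𝕜 := by
  have hl (x y : E') : ⟪A.comp Φ (U x), U y⟫_𝕜 = ⟪Φ (U y), Φ (U x)⟫_𝕜 := hA.inner_comp_apply _ _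
  have hr (x y : E') : ⟪U (A'.comp Ψ x), U y⟫_𝕜 = ⟪Ψ y, Ψ x⟫_𝕜 := by
    rw [U.inner_map_map, hA'.inner_comp_apply]
  constructor
  · intro h x y
    rw [← hl, h, hr]
  · intro h x
    refine ext_inner_right 𝕜 (U.surjective.forall.mpr fun y ↦ ?_)
    rw [hl, h, hr]

end IsConjAdjoint

theorem conjLinear_unitarily_equivalent_iff_charpoly_eq_general
    [FiniteDimensional 𝕜 E] [FiniteDimensional 𝕜 F]
    [FiniteDimensional 𝕜 E'] [FiniteDimensional 𝕜 F']
    {Φ : E →ₗ⋆[𝕜] F} {Ψ : E' →ₗ⋆[𝕜] F'} {A : F →ₗ⋆[𝕜] E} {A' : F' →ₗ⋆[𝕜] E'}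
    (hA : IsConjAdjoint A Φ) (hA' : IsConjAdjoint A' Ψ) :
    (∃ (U : E' ≃ₗᵢ[𝕜] E) (V : F' ≃ₗᵢ[𝕜] F), ∀ x, Φ (U x) = V (Ψ x)) ↔
      (A.comp Φ).charpoly = (A'.comp Ψ).charpoly ∧ finrank 𝕜 F' = finrank 𝕜 F := by
  calc (∃ (U : E' ≃ₗᵢ[𝕜] E) (V : F' ≃ₗᵢ[𝕜] F), ∀ x, Φ (U x) = V (Ψ x))
    _ ↔ ∃ U : E' ≃ₗᵢ[𝕜] E, (∀ x y, ⟪Φ (U x), Φ (U y)⟫_𝕜 = ⟪Ψ x, Ψ y⟫_𝕜) ∧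
          finrank 𝕜 F' = finrank 𝕜 F :=
      exists_congr fun U ↦ exists_linearIsometryEquiv_comp_eq_iff_inner_eq
        (Φ.comp U.toLinearEquiv.toLinearMap) Ψ
    _ ↔ (∃ U : E' ≃ₗᵢ[𝕜] E, ∀ x, A.comp Φ (U x) = U (A'.comp Ψ x)) ∧
          finrank 𝕜 F' = finrank 𝕜 F := by
      simp only [exists_and_right, hA.comp_intertwines_iff_inner_eq hA']
    _ ↔ (A.comp Φ).charpoly = (A'.comp Ψ).charpoly ∧ finrank 𝕜 F' = finrank 𝕜 F := by
      rw [exists_linearIsometryEquiv_intertwining_iff_charpoly_eq hA.isSymmetric_comp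
        hA'.isSymmetric_comp]

end ConjLinear

theorem conjLinear_unitarily_equivalent_iff_charpoly_eq
    {E F E' F' : Type}
    [NormedAddCommGroup E] [InnerProductSpace ℂ E] [FiniteDimensional ℂ E]
    [NormedAddCommGroup F] [InnerProductSpace ℂ F] [FiniteDimensional ℂ F]
    [NormedAddCommGroup E'] [InnerProductSpace ℂ E'] [FiniteDimensional ℂ E']
    [NormedAddCommGroup F'] [InnerProductSpace ℂ F'] [FiniteDimensional ℂ F']
    (Φ : E →ₗ⋆[ℂ] F) (Ψ : E' →ₗ⋆[ℂ] F')
    (hΦ : Function.Bijective Φ) (hΨ : Function.Bijective Ψ)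
    (A : F →ₗ⋆[ℂ] E) (hA : ∀ (x : E) (y : F), ⟪Φ x, y⟫ = ⟪A y, x⟫)
    (A' : F' →ₗ⋆[ℂ] E') (hA' : ∀ (x : E') (y : F'), ⟪Ψ x, y⟫ = ⟪A' y, x⟫) :
    (∃ (U : E' ≃ₗᵢ[ℂ] E) (V : F' ≃ₗᵢ[ℂ] F), ∀ x : E', Φ (U x) = V (Ψ x)) ↔
      (A.comp Φ).charpoly = (A'.comp Ψ).charpoly := by
  refine (conjLinear_unitarily_equivalent_iff_charpoly_eq_general hA hA').trans
    (and_iff_left_of_imp fun hchar ↦ ?_)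
  have hconj : Function.Bijective (starRingEnd ℂ) := (starRingAut (R := ℂ)).bijective
  rw [← finrank_eq_of_semilinear_bijective hconj hΦ,
    ← finrank_eq_of_semilinear_bijective hconj hΨ, finrank_eq_of_charpoly_eq hchar]
end
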